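/- (Proposition 1, part (b)) For all b, b' ∈ B with φ_{b'} < 1, the Green's function of A ∪ B satisfies G_B(b,b') ≤ G_{A∪B}(b,b') ≤ G_B(b,b') + (φ_b / (1 − φ_{b'})) · G_B(b',b'). -/

import Mathlib

open MeasureTheory ENNReal

/-- The first hitting time of the set `D` along the path `s`, valued in `ℕ∞`
(`⊤` if the path never visits `D`). -/
noncomputable def hitTime {Ω : Type*} (D : Set Ω) (s : ℕ → Ω) : ℕ∞ :=
  ⨅ (k : ℕ) (_ : s k ∈ D), (k : ℕ∞)

/-- The path of the walk started at `x` with steps `ξ` : `S_n = x + ∑_{j<n} ξ j`. -/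
def walk {Ω : Type*} [AddCommGroup Ω] (x : Ω) (ξ : ℕ → Ω) (n : ℕ) : Ω :=
  x + ∑ j ∈ Finset.range n, ξ j

/-- A random walk on a group `Ω`, described by the common law `ν` of its i.i.d.
steps together with the joint law `μ` of the step sequence (characterized on
cylinder sets as the product of `ν`'s). -/
structure RandomWalk (Ω : Type*) [AddCommGroup Ω] [MeasurableSpace Ω] where
  ν : Measure Ω
  probν : IsProbabilityMeasure ν
  μ : Measure (ℕ → Ω)
  probμ : IsProbabilityMeasure μ
  iid : ∀ (n : ℕ) (f : Fin n → Ω),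
    μ {ξ | ∀ i : Fin n, ξ (i : ℕ) = f i} = ∏ i : Fin n, ν {f i}

variable {Ω : Type*} [AddCommGroup Ω] [MeasurableSpace Ω]

/-- `P^x(θ)` : the probability that the path `(S_n)` of the walk started at `x`
has the property `θ`. -/
noncomputable def RandomWalk.P (W : RandomWalk Ω) (x : Ω) (θ : Set (ℕ → Ω)) : ℝ≥0∞ :=
  W.μ {ξ | walk x ξ ∈ θ}

/-- `E^x(T_D)` : the expected hitting time of `D` for the walk started at `x`. -/
noncomputable def RandomWalk.E (W : RandomWalk Ω) (x : Ω) (D : Set Ω) : ℝ≥0∞ :=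
  ∫⁻ ξ, (hitTime D (walk x ξ) : ℝ≥0∞) ∂W.μ

/-- The truncated Green's function `G_D(x,y) = ∑_{j≥0} P^x(S_j = y, j < T_{Dᶜ})`. -/
noncomputable def RandomWalk.G (W : RandomWalk Ω) (D : Set Ω) (x y : Ω) : ℝ≥0∞ :=
  ∑' j : ℕ, W.P x {s | s j = y ∧ (j : ℕ∞) < hitTime Dᶜ s}

/-- The hitting distribution `H_D(x,y) = P^x(S_{T_D} = y)`. -/
noncomputable def RandomWalk.H (W : RandomWalk Ω) (D : Set Ω) (x y : Ω) : ℝ≥0∞ :=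
  W.P x {s | ∃ k : ℕ, hitTime D s = (k : ℕ∞) ∧ s k = y}

/- Write `ψ` for `hitBefore B C` and `φ` for `returnProb A B C`. Conditioning on the first step
shows that `ψ` is superharmonic off `C`, that `φ` is superharmonic off `A ∪ C`, and that
`G_D(x, y) = 1_{x = y} + ∫ G_D(x + z, y) dν(z)` for `x ∈ D`. A comparison principle then gives
successively, for `b' ∈ B` and `x` arbitrary, the bounds
`G_{A ∪ B}(x, b') ≤ G_{A ∪ B}(b', b')`, then
`G_{A ∪ B}(x, b') ≤ ψ(x) G_{A ∪ B}(b', b')`, and finally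
`G_{A ∪ B}(x, b') ≤ G_B(x, b') + φ(x) G_{A ∪ B}(b', b')`.
Taking `x = b'` in the last one and solving for `G_{A ∪ B}(b', b')` bounds it by
`G_B(b', b') / (1 - φ(b'))`. As `G_{A ∪ B}(b', b')` might a priori be infinite, the argument is run
with the partial sums of `G_{A ∪ B}`. -/

theorem le_div_one_sub_of_le_add_mul {a c q : ℝ≥0∞} (hq : q < 1) (hc : c ≠ ⊤)
    (h : c ≤ a + q * c) : c ≤ a / (1 - q) := by
  rw [ENNReal.le_div_iff_mul_le (.inl (tsub_pos_of_lt hq).ne')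
    (.inl (ne_top_of_le_ne_top one_ne_top tsub_le_self)),
    ENNReal.mul_sub fun _ _ => hc, mul_one, tsub_le_iff_right, mul_comm c]
  exact h

section HitTime

variable {α : Type*} {D : Set α} {s : ℕ → α}

theorem hitTime_anti {D' : Set α} (h : D ⊆ D') (s : ℕ → α) : hitTime D' s ≤ hitTime D s :=
  iInf_mono fun _ => iInf_mono' fun hk => ⟨h hk, le_rfl⟩

theorem hitTime_eq_zero (h : s 0 ∈ D) : hitTime D s = 0 :=
  nonpos_iff_eq_zero.1 (iInf₂_le (f := fun k (_ : s k ∈ D) => (k : ℕ∞)) 0 h)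

theorem hitTime_le_hitTime_tail_add_one (D : Set α) (s : ℕ → α) :
    hitTime D s ≤ hitTime D (fun n => s (n + 1)) + 1 := by
  simp only [hitTime, ENat.iInf_add]
  exact le_iInf₂ fun k hk => iInf₂_le (f := fun k (_ : s k ∈ D) => (k : ℕ∞)) (k + 1) hk

theorem hitTime_eq_hitTime_tail_add_one (h : s 0 ∉ D) :
    hitTime D s = hitTime D (fun n => s (n + 1)) + 1 := by
  refine (hitTime_le_hitTime_tail_add_one D s).antisymm (le_iInf₂ fun k hk => ?_)
  obtain _ | k := k
  · exact absurd hk h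
  · rw [Nat.cast_succ]
    gcongr
    exact iInf₂_le k hk

theorem hitTime_pos (h : s 0 ∉ D) : 0 < hitTime D s := by
  rw [hitTime_eq_hitTime_tail_add_one h]
  exact one_pos.trans_le le_add_self

instance : BorelSpace ℕ∞ := ⟨borel_eq_top_of_countable.symm⟩

theorem measurable_hitTime [Countable α] [MeasurableSpace α] [MeasurableSingletonClass α]
    (D : Set α) : Measurable (hitTime D) :=
  .iInf fun k =>
    (Measurable.of_discrete (f := fun x => ⨅ _ : x ∈ D, (k : ℕ∞))).comp (measurable_pi_apply k)

end HitTime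

/-- The sequence `x, s 0, s 1, …`, used both to prepend a first step to a step sequence and to
prepend a starting point to a path. -/
def seqCons {α : Type*} (x : α) (s : ℕ → α) : ℕ → α
  | 0 => x
  | n + 1 => s n

theorem measurable_seqCons {α : Type*} [MeasurableSpace α] :
    Measurable fun p : α × (ℕ → α) => seqCons p.1 p.2 := by
  refine measurable_pi_iff.2 fun n => ?_
  cases n with
  | zero => exact measurable_fst
  | succ n => exact (measurable_pi_apply n).comp measurable_snd

theorem walk_seqCons {α : Type*} [AddCommGroup α] (x z : α) (ξ : ℕ → α) :
    walk x (seqCons z ξ) = seqCons x (walk (x + z) ξ) := by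
  funext n
  cases n with
  | zero => simp [walk, seqCons]
  | succ n =>
    simp only [walk, seqCons, Finset.sum_range_succ']
    abel

theorem measurable_walk {α : Type*} [AddCommGroup α] [MeasurableSpace α] [MeasurableAdd₂ α]
    (x : α) : Measurable (walk x) :=
  measurable_pi_iff.2 fun _ =>
    (Finset.measurable_sum _ fun j _ => measurable_pi_apply j).const_add x

theorem measure_ext_of_initial_segments {α : Type*} [Countable α] [MeasurableSpace α]
    [MeasurableSingletonClass α] {μ₁ μ₂ : Measure (ℕ → α)} [IsFiniteMeasure μ₁]
    (h : ∀ (n : ℕ) (f : Fin n → α),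
      μ₁ {ξ | ∀ i : Fin n, ξ (i : ℕ) = f i} = μ₂ {ξ | ∀ i : Fin n, ξ (i : ℕ) = f i}) :
    μ₁ = μ₂ := by
  let initial (n : ℕ) (ξ : ℕ → α) (i : Fin n) : α := ξ i
  have measurable_initial (n : ℕ) : Measurable (initial n) :=
    measurable_pi_iff.2 fun i => measurable_pi_apply (i : ℕ)
  have map_initial (n : ℕ) : μ₁.map (initial n) = μ₂.map (initial n) := by
    refine Measure.ext_of_singleton fun f => ?_
    have preimage_singleton : initial n ⁻¹' {f} = {ξ | ∀ i : Fin n, ξ (i : ℕ) = f i} :=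
      Set.ext fun _ => funext_iff
    rw [Measure.map_apply (measurable_initial n) (measurableSet_singleton f),
      Measure.map_apply (measurable_initial n) (measurableSet_singleton f),
      preimage_singleton, h]
  refine IsProjectiveLimit.unique (P := fun I => μ₁.map I.restrict) (fun _ => rfl) fun I => ?_
  obtain ⟨n, hn⟩ : ∃ n, ∀ i ∈ I, i < n :=
    ⟨I.sup id + 1, fun i hi => Nat.lt_succ_of_le (Finset.le_sup (f := id) hi)⟩
  let project (g : Fin n → α) (i : I) : α := g ⟨i, hn i i.2⟩
  have measurable_project : Measurable project :=
    measurable_pi_iff.2 fun i => measurable_pi_apply _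
  change μ₂.map (project ∘ initial n) = μ₁.map (project ∘ initial n)
  rw [← Measure.map_map measurable_project (measurable_initial n),
    ← Measure.map_map measurable_project (measurable_initial n), map_initial]

namespace RandomWalk

instance (W : RandomWalk Ω) : IsProbabilityMeasure W.ν := W.probν

instance (W : RandomWalk Ω) : IsProbabilityMeasure W.μ := W.probμ

/-- The one-step average `E^x f(S_1)`. -/
noncomputable def stepMean (W : RandomWalk Ω) (f : Ω → ℝ≥0∞) (x : Ω) : ℝ≥0∞ :=
  ∫⁻ z, f (x + z) ∂W.ν

/-- The probability `P^x(T_B < T_C)`, written `ψ_x` in the paper. -/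
noncomputable def hitBefore (W : RandomWalk Ω) (B C : Set Ω) (x : Ω) : ℝ≥0∞ :=
  W.P x {s | hitTime B s < hitTime C s}

/-- The probability, written `φ_x` in the paper, that the walk started at `x` enters `A ∪ C` at a
point of `A` and, from then on, visits `B` before `C`. -/
noncomputable def returnProb (W : RandomWalk Ω) (A B C : Set Ω) (x : Ω) : ℝ≥0∞ :=
  ∑' a : A, W.H (A ∪ C) x a * W.hitBefore B C a

/-- The transition probability `P^x(S_j = y, j < T_{Dᶜ})` of the walk killed on leaving `D`. -/
noncomputable def killedProb (W : RandomWalk Ω) (D : Set Ω) (j : ℕ) (x y : Ω) : ℝ≥0∞ :=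
  W.P x {s | s j = y ∧ (j : ℕ∞) < hitTime Dᶜ s}

/-- The partial sum over the times `j < n` of the series defining `G_D(x, y)`; unlike `G` it is
always finite. -/
noncomputable def partialG (W : RandomWalk Ω) (D : Set Ω) (n : ℕ) (x y : Ω) : ℝ≥0∞ :=
  ∑ j ∈ Finset.range n, W.killedProb D j x y

section Basic

variable (W : RandomWalk Ω) {A B C D : Set Ω} {x : Ω}

theorem P_mono {θ θ' : Set (ℕ → Ω)} (h : ∀ s, s 0 = x → s ∈ θ → s ∈ θ') :
    W.P x θ ≤ W.P x θ' :=
  measure_mono fun _ hξ => h _ (by simp [walk]) hξ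

theorem P_le_one (x : Ω) (θ : Set (ℕ → Ω)) : W.P x θ ≤ 1 :=
  prob_le_one

theorem P_eq_one {θ : Set (ℕ → Ω)} (h : ∀ s, s 0 = x → s ∈ θ) : W.P x θ = 1 :=
  (W.P_le_one x θ).antisymm <|
    calc 1 = W.P x Set.univ := measure_univ.symm
      _ ≤ W.P x θ := W.P_mono fun s hs _ => h s hs

theorem P_eq_zero {θ : Set (ℕ → Ω)} (h : ∀ s, s 0 = x → s ∉ θ) : W.P x θ = 0 :=
  nonpos_iff_eq_zero.1 <|
    calc W.P x θ ≤ W.P x ∅ := W.P_mono h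
      _ = 0 := measure_empty

theorem stepMean_mono {f g : Ω → ℝ≥0∞} (h : f ≤ g) (x : Ω) : W.stepMean f x ≤ W.stepMean g x :=
  lintegral_mono fun z => h (x + z)

theorem stepMean_const (c : ℝ≥0∞) (x : Ω) : W.stepMean (fun _ => c) x = c := by
  simp [stepMean]

theorem hitBefore_eq_one (hxB : x ∈ B) (hxC : x ∉ C) : W.hitBefore B C x = 1 := by
  refine W.P_eq_one fun s hs => ?_
  rw [← hs] at hxB hxC
  exact (hitTime_eq_zero hxB).trans_lt (hitTime_pos hxC)

theorem H_self (hx : x ∈ D) : W.H D x x = 1 :=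
  W.P_eq_one fun _ hs => ⟨0, hitTime_eq_zero (hs ▸ hx), hs⟩

theorem hitBefore_le_returnProb (B C : Set Ω) (hx : x ∈ A) :
    W.hitBefore B C x ≤ W.returnProb A B C x :=
  calc W.hitBefore B C x = W.H (A ∪ C) x x * W.hitBefore B C x := by
        rw [W.H_self (.inl hx), one_mul]
    _ ≤ W.returnProb A B C x :=
        ENNReal.le_tsum (f := fun a : A => W.H (A ∪ C) x a * W.hitBefore B C a) ⟨x, hx⟩

theorem killedProb_zero (hx : x ∈ D) (y : Ω) :
    W.killedProb D 0 x y = ({y} : Set Ω).indicator 1 x := by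
  by_cases hxy : x = y
  · rw [Set.indicator_of_mem (Set.mem_singleton_iff.2 hxy)]
    exact W.P_eq_one fun s hs => ⟨hs.trans hxy, hitTime_pos (by simpa [hs] using hx)⟩
  · rw [Set.indicator_of_notMem (Set.mem_singleton_iff.not.2 hxy)]
    exact W.P_eq_zero fun s hs h => hxy (hs.symm.trans h.1)

theorem killedProb_of_notMem (hx : x ∉ D) (j : ℕ) (y : Ω) : W.killedProb D j x y = 0 := by
  refine W.P_eq_zero fun s hs h => ?_
  have exit : hitTime Dᶜ s = 0 := hitTime_eq_zero (by rwa [hs])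
  exact not_lt_zero (exit ▸ h.2)

theorem partialG_mono (D : Set Ω) (x y : Ω) : Monotone fun n => W.partialG D n x y :=
  fun _ _ h => Finset.sum_le_sum_of_subset (Finset.range_mono h)

theorem partialG_ne_top (D : Set Ω) (n : ℕ) (x y : Ω) : W.partialG D n x y ≠ ⊤ :=
  ENNReal.sum_ne_top.2 fun _ _ => ne_top_of_le_ne_top one_ne_top (W.P_le_one _ _)

theorem G_eq_iSup_partialG (D : Set Ω) (x y : Ω) : W.G D x y = ⨆ n, W.partialG D n x y :=
  ENNReal.tsum_eq_iSup_nat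

theorem G_mono {D' : Set Ω} (h : D ⊆ D') (x y : Ω) : W.G D x y ≤ W.G D' x y :=
  ENNReal.tsum_le_tsum fun _ => W.P_mono fun s _ hs =>
    ⟨hs.1, hs.2.trans_le (hitTime_anti (Set.compl_subset_compl.2 h) s)⟩

end Basic

section FirstStep

variable [Countable Ω] [MeasurableSingletonClass Ω] (W : RandomWalk Ω) {A C D : Set Ω} {x : Ω}

theorem map_seqCons_prod : (W.ν.prod W.μ).map (fun p => seqCons p.1 p.2) = W.μ := by
  refine measure_ext_of_initial_segments fun n f => ?_
  have measurableSet_segment : MeasurableSet {ξ : ℕ → Ω | ∀ i : Fin n, ξ (i : ℕ) = f i} :=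
    Measurable.setOf (by fun_prop)
  rw [Measure.map_apply measurable_seqCons measurableSet_segment, W.iid]
  cases n with
  | zero => simp
  | succ n =>
    have preimage_segment :
        (fun p : Ω × (ℕ → Ω) => seqCons p.1 p.2) ⁻¹' {ξ | ∀ i : Fin (n + 1), ξ (i : ℕ) = f i} =
          {f 0} ×ˢ {ξ | ∀ i : Fin n, ξ (i : ℕ) = f i.succ} := by
      ext p
      simp [Fin.forall_fin_succ, seqCons]
    rw [preimage_segment, Measure.prod_prod, W.iid n fun i => f i.succ, Fin.prod_univ_succ]

theorem P_eq_stepMean (x : Ω) {θ : Set (ℕ → Ω)} (hθ : MeasurableSet θ) :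
    W.P x θ = W.stepMean (fun x' => W.P x' (seqCons x ⁻¹' θ)) x := by
  have measurableSet_walk : MeasurableSet {ξ | walk x ξ ∈ θ} := measurable_walk x hθ
  calc W.P x θ = (W.ν.prod W.μ).map (fun p => seqCons p.1 p.2) {ξ | walk x ξ ∈ θ} := by
        rw [map_seqCons_prod, P]
    _ = ∫⁻ z, W.μ {ξ | walk x (seqCons z ξ) ∈ θ} ∂W.ν := by
        rw [Measure.map_apply measurable_seqCons measurableSet_walk,
          Measure.prod_apply (measurable_seqCons measurableSet_walk)]
        rfl
    _ = W.stepMean (fun x' => W.P x' (seqCons x ⁻¹' θ)) x := by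
        simp only [walk_seqCons]
        rfl

theorem stepMean_add (f g : Ω → ℝ≥0∞) (x : Ω) :
    W.stepMean (fun x' => f x' + g x') x = W.stepMean f x + W.stepMean g x :=
  lintegral_add_left .of_discrete _

theorem stepMean_mul_const (f : Ω → ℝ≥0∞) (c : ℝ≥0∞) (x : Ω) :
    W.stepMean (fun x' => f x' * c) x = W.stepMean f x * c :=
  lintegral_mul_const c .of_discrete

theorem stepMean_tsum {ι : Type*} [Countable ι] (f : ι → Ω → ℝ≥0∞) (x : Ω) :
    W.stepMean (fun x' => ∑' i, f i x') x = ∑' i, W.stepMean (f i) x :=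
  lintegral_tsum fun _ => Measurable.of_discrete.aemeasurable

theorem stepMean_hitBefore_le (B : Set Ω) (hx : x ∉ C) :
    W.stepMean (W.hitBefore B C) x ≤ W.hitBefore B C x := by
  rw [hitBefore, W.P_eq_stepMean x (measurableSet_lt (measurable_hitTime B) (measurable_hitTime C))]
  refine W.stepMean_mono (fun x' => W.P_mono fun s _ hs => ?_) x
  calc hitTime B (seqCons x s) ≤ hitTime B s + 1 := hitTime_le_hitTime_tail_add_one B _
    _ < hitTime C s + 1 := (ENat.add_lt_add_iff_right ENat.one_ne_top).2 hs
    _ = hitTime C (seqCons x s) := (hitTime_eq_hitTime_tail_add_one (s := seqCons x s) hx).symm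

theorem stepMean_H_le (hx : x ∉ D) (y : Ω) :
    W.stepMean (fun x' => W.H D x' y) x ≤ W.H D x y := by
  have measurableSet_hit : MeasurableSet {s : ℕ → Ω | ∃ k : ℕ, hitTime D s = k ∧ s k = y} :=
    (Measurable.exists fun k => ((measurable_hitTime D).eq_const _).and
      ((measurable_pi_apply k).eq_const y)).setOf
  rw [H, W.P_eq_stepMean x measurableSet_hit]
  refine W.stepMean_mono (fun x' => W.P_mono ?_) x
  rintro s - ⟨k, hk, hy⟩
  refine ⟨k + 1, ?_, hy⟩
  rw [hitTime_eq_hitTime_tail_add_one hx, Nat.cast_succ, ← hk]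
  rfl

theorem stepMean_returnProb_le (B : Set Ω) (hx : x ∉ A ∪ C) :
    W.stepMean (W.returnProb A B C) x ≤ W.returnProb A B C x :=
  calc W.stepMean (W.returnProb A B C) x
      = ∑' a : A, W.stepMean (fun x' => W.H (A ∪ C) x' a) x * W.hitBefore B C a := by
        simp only [← stepMean_mul_const, ← stepMean_tsum]
        rfl
    _ ≤ W.returnProb A B C x :=
        ENNReal.tsum_le_tsum fun a => by gcongr; exact W.stepMean_H_le hx a

theorem killedProb_succ (hx : x ∈ D) (j : ℕ) (y : Ω) :
    W.killedProb D (j + 1) x y = W.stepMean (fun x' => W.killedProb D j x' y) x := by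
  have measurableSet_killed :
      MeasurableSet {s : ℕ → Ω | s (j + 1) = y ∧ ((j + 1 : ℕ) : ℕ∞) < hitTime Dᶜ s} :=
    .inter (Measurable.setOf (by fun_prop))
      (measurableSet_lt measurable_const (measurable_hitTime Dᶜ))
  rw [killedProb, W.P_eq_stepMean x measurableSet_killed]
  have preimage_killed : seqCons x ⁻¹' {s | s (j + 1) = y ∧ ((j + 1 : ℕ) : ℕ∞) < hitTime Dᶜ s} =
      {s | s j = y ∧ (j : ℕ∞) < hitTime Dᶜ s} := by
    ext s
    have tail : hitTime Dᶜ (seqCons x s) = hitTime Dᶜ s + 1 :=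
      hitTime_eq_hitTime_tail_add_one (s := seqCons x s) (not_not.2 hx)
    simp only [Set.mem_preimage, Set.mem_ofPred_eq, tail, Nat.cast_succ,
      ENat.add_lt_add_iff_right ENat.one_ne_top, seqCons]
  rw [preimage_killed]
  rfl

theorem partialG_succ (hx : x ∈ D) (n : ℕ) (y : Ω) :
    W.partialG D (n + 1) x y =
      ({y} : Set Ω).indicator 1 x + W.stepMean (fun x' => W.partialG D n x' y) x := by
  simp only [partialG, Finset.sum_range_succ', W.killedProb_zero hx, W.killedProb_succ hx]
  rw [add_comm]
  congr 1
  exact (lintegral_finsetSum _ fun _ _ => .of_discrete).symm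

theorem G_eq_indicator_add_stepMean (hx : x ∈ D) (y : Ω) :
    W.G D x y = ({y} : Set Ω).indicator 1 x + W.stepMean (fun x' => W.G D x' y) x :=
  calc W.G D x y = W.killedProb D 0 x y + ∑' j, W.killedProb D (j + 1) x y :=
        tsum_eq_zero_add' ENNReal.summable
    _ = ({y} : Set Ω).indicator 1 x + W.stepMean (fun x' => W.G D x' y) x := by
        simp only [W.killedProb_zero hx, W.killedProb_succ hx, ← stepMean_tsum]
        rfl

end FirstStep

section Comparison

variable [Countable Ω] [MeasurableSingletonClass Ω] (W : RandomWalk Ω) {A B C D : Set Ω} {y : Ω}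

theorem partialG_le_of_superharmonic {N : ℕ} {f : Ω → ℝ≥0∞}
    (hf : ∀ x ∈ D, W.partialG D N x y ≤ f x ∨
      ({y} : Set Ω).indicator 1 x + W.stepMean f x ≤ f x) (x : Ω) :
    W.partialG D N x y ≤ f x := by
  suffices ∀ n ≤ N, ∀ x, W.partialG D n x y ≤ f x from this N le_rfl x
  intro n
  induction n with
  | zero => simp [partialG]
  | succ n ih =>
    intro hn x
    by_cases hx : x ∈ D
    · obtain dominated | superharmonic := hf x hx
      · exact (W.partialG_mono D x y hn).trans dominated
      · rw [W.partialG_succ hx]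
        refine le_trans ?_ superharmonic
        gcongr
        exact W.stepMean_mono (ih (by omega)) x
    · simp [partialG, W.killedProb_of_notMem hx]

theorem partialG_le_partialG_self (D : Set Ω) (n : ℕ) (x y : Ω) :
    W.partialG D n x y ≤ W.partialG D n y y := by
  refine W.partialG_le_of_superharmonic (f := fun _ => W.partialG D n y y) (fun x _ => ?_) x
  obtain rfl | hxy := eq_or_ne x y
  · exact .inl le_rfl
  · right
    rw [Set.indicator_of_notMem (Set.mem_singleton_iff.not.2 hxy), zero_add, stepMean_const]

theorem partialG_union_le_hitBefore_mul (hC : Disjoint (A ∪ B) C) (hy : y ∈ B) (n : ℕ) (x : Ω) :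
    W.partialG (A ∪ B) n x y ≤ W.hitBefore B C x * W.partialG (A ∪ B) n y y := by
  refine W.partialG_le_of_superharmonic
    (f := fun x => W.hitBefore B C x * W.partialG (A ∪ B) n y y) (fun x hx => ?_) x
  have hxC : x ∉ C := Set.disjoint_left.1 hC hx
  by_cases hxB : x ∈ B
  · left
    rw [W.hitBefore_eq_one hxB hxC, one_mul]
    exact W.partialG_le_partialG_self _ n x y
  · right
    have hxy : x ∉ ({y} : Set Ω) := fun h => hxB (Set.mem_singleton_iff.1 h ▸ hy)
    rw [Set.indicator_of_notMem hxy, zero_add, stepMean_mul_const]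
    gcongr
    exact W.stepMean_hitBefore_le B hxC

theorem partialG_union_le_G_add (hC : Disjoint (A ∪ B) C) (hy : y ∈ B) (n : ℕ) (x : Ω) :
    W.partialG (A ∪ B) n x y ≤
      W.G B x y + W.returnProb A B C x * W.partialG (A ∪ B) n y y := by
  refine W.partialG_le_of_superharmonic
    (f := fun x => W.G B x y + W.returnProb A B C x * W.partialG (A ∪ B) n y y)
    (fun x hx => ?_) x
  by_cases hxA : x ∈ A
  · left
    refine (W.partialG_union_le_hitBefore_mul hC hy n x).trans (le_add_left ?_)
    gcongr
    exact W.hitBefore_le_returnProb B C hxA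
  · right
    have hxB : x ∈ B := hx.resolve_left hxA
    have hxAC : x ∉ A ∪ C := not_or.2 ⟨hxA, Set.disjoint_left.1 hC hx⟩
    rw [stepMean_add, stepMean_mul_const, ← add_assoc, ← W.G_eq_indicator_add_stepMean hxB]
    gcongr
    exact W.stepMean_returnProb_le B hxAC

theorem partialG_union_self_le (hC : Disjoint (A ∪ B) C) (hy : y ∈ B)
    (hφ : W.returnProb A B C y < 1) (n : ℕ) :
    W.partialG (A ∪ B) n y y ≤ W.G B y y / (1 - W.returnProb A B C y) :=
  le_div_one_sub_of_le_add_mul hφ (W.partialG_ne_top _ n y y)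
    (W.partialG_union_le_G_add hC hy n y)

end Comparison

end RandomWalk

theorem prop1b_general [Countable Ω] [MeasurableSingletonClass Ω] (W : RandomWalk Ω)
    {A B C : Set Ω} (hC : Disjoint (A ∪ B) C) (b : Ω) {b' : Ω} (hb' : b' ∈ B)
    (hφ : W.returnProb A B C b' < 1) :
    W.G B b b' ≤ W.G (A ∪ B) b b' ∧
      W.G (A ∪ B) b b' ≤ W.G B b b' +
        (W.returnProb A B C b / (1 - W.returnProb A B C b')) * W.G B b' b' := by
  refine ⟨W.G_mono Set.subset_union_right b b', ?_⟩
  rw [W.G_eq_iSup_partialG (A ∪ B)]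
  refine iSup_le fun n => ?_
  calc W.partialG (A ∪ B) n b b'
      ≤ W.G B b b' + W.returnProb A B C b * W.partialG (A ∪ B) n b' b' :=
        W.partialG_union_le_G_add hC hb' n b
    _ ≤ W.G B b b' + W.returnProb A B C b * (W.G B b' b' / (1 - W.returnProb A B C b')) := by
        gcongr
        exact W.partialG_union_self_le hC hb' hφ n
    _ = W.G B b b' + (W.returnProb A B C b / (1 - W.returnProb A B C b')) * W.G B b' b' := by
        rw [mul_div_assoc', ENNReal.mul_div_right_comm]

/-- Proposition 1, part (b): for `b, b' ∈ B` with `φ_{b'} < 1`,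
`G_B(b,b') ≤ G_{A∪B}(b,b') ≤ G_B(b,b') + (φ_b/(1-φ_{b'})) G_B(b',b')`. -/
theorem prop1b
    {Ω : Type*} [AddCommGroup Ω] [Countable Ω] [MeasurableSpace Ω]
    [MeasurableSingletonClass Ω] (W : RandomWalk Ω) (A B C : Set Ω)
    (hcover : A ∪ B ∪ C = Set.univ) (hAB : Disjoint A B) (hAC : Disjoint A C)
    (hBC : Disjoint B C) (b b' : Ω) (hb : b ∈ B) (hb' : b' ∈ B)
    (φ : Ω → ℝ≥0∞)
    (hφdef : ∀ x, φ x = ∑' a' : A,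
      W.H (A ∪ C) x a' * W.P a' {s | hitTime B s < hitTime C s})
    (hφ : φ b' < 1) :
    W.G B b b' ≤ W.G (A ∪ B) b b' ∧
      W.G (A ∪ B) b b' ≤ W.G B b b' + (φ b / (1 - φ b')) * W.G B b' b' := by
  obtain rfl : φ = W.returnProb A B C := funext hφdef
  exact prop1b_general W (hAC.union_left hBC) b hb' hφ
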